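/- Let (X,d) be a locally compact separable metric space with an exhaustion ⟨K_n : n < ω⟩ by compact sets satisfying K_n ⊆ int(K_{n+1}) and X = ⋃_n K_n. Then for every g : ω → ω there exists a proper metric d_g on X, compatible with the topology of X, such that (i) for every n and all x, y ∈ X \ K_{n-1}, d_g(x,y) ≥ g(n)·d(x,y), and (ii) for every n, d_g(K_{n-1}, X \ K_n) ≥ n (with K_{-1} = ∅). -/

import Mathlib

/-!
Collapsing a bounded set `A` to a point turns the metric into the pseudometric
`min (d x y) (d x A + d y A)`, which vanishes on `A` and, for points whose distance from `A` is
bounded below, dominates a positive multiple of `d`. Adding to `d` a large multiple of the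
collapse of `K n`, for every `n`, therefore stretches distances outside `K (n + 1)` and the gap
between `K n` and the complement of `K (n + 1)` as much as desired. On `K m` only the terms with
`n < m` survive, so the sum is finite and locally Lipschitz equivalent to `d`. Once the gap after
`K n` is at least `n` wide for every `n`, each bounded set is contained in some `K m`.
-/

open Filter Metric Set Topology
open scoped ENNReal NNReal

section Collapse

variable {X : Type*} [PseudoEMetricSpace X] {A : Set X} {x y : X}

/-- The extended pseudometric of the quotient of `X` that collapses `A` to a point. Since
`infEDist x ∅ = ∞`, collapsing the empty set changes nothing. -/
noncomputable def collapseEDist (A : Set X) (x y : X) : ℝ≥0∞ :=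
  min (edist x y) (infEDist x A + infEDist y A)

lemma collapseEDist_le_edist : collapseEDist A x y ≤ edist x y :=
  min_le_left _ _

lemma collapseEDist_self (A : Set X) (x : X) : collapseEDist A x x = 0 :=
  nonpos_iff_eq_zero.1 (collapseEDist_le_edist.trans_eq (edist_self x))

lemma collapseEDist_comm (A : Set X) (x y : X) : collapseEDist A x y = collapseEDist A y x := by
  simp only [collapseEDist, edist_comm, add_comm]

lemma collapseEDist_triangle (A : Set X) (x y z : X) :
    collapseEDist A x z ≤ collapseEDist A x y + collapseEDist A y z := by
  have hxy : infEDist x A ≤ edist x y + infEDist y A := infEDist_le_edist_add_infEDist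
  have hzy : infEDist z A ≤ infEDist y A + edist y z := by
    simpa only [edist_comm z y] using infEDist_le_infEDist_add_edist (x := z) (y := y) (s := A)
  simp only [collapseEDist, min_add, add_min, le_min_iff]
  refine ⟨⟨?_, ?_⟩, ?_, ?_⟩
  · exact min_le_of_left_le (edist_triangle x y z)
  · refine min_le_of_right_le ?_
    calc infEDist x A + infEDist z A ≤ infEDist x A + (infEDist y A + edist y z) := by gcongr
      _ = infEDist x A + infEDist y A + edist y z := (add_assoc _ _ _).symm
  · refine min_le_of_right_le ?_
    calc infEDist x A + infEDist z A ≤ edist x y + infEDist y A + infEDist z A := by gcongr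
      _ = edist x y + (infEDist y A + infEDist z A) := add_assoc _ _ _
  · exact min_le_of_right_le (add_le_add le_self_add le_add_self)

lemma collapseEDist_eq_zero_of_mem (hx : x ∈ A) (hy : y ∈ A) : collapseEDist A x y = 0 := by
  simp only [collapseEDist, infEDist_zero_of_mem hx, infEDist_zero_of_mem hy, add_zero, zero_le,
    min_eq_right]

lemma infEDist_le_collapseEDist_of_mem (hx : x ∈ A) : infEDist y A ≤ collapseEDist A x y :=
  le_min (edist_comm x y ▸ infEDist_le_edist_of_mem hx) le_add_self

lemma edist_le_mul_collapseEDist {δ : ℝ≥0∞} (hδ₀ : δ ≠ 0) (hδ : δ ≠ ∞) (hx : δ ≤ infEDist x A)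
    (hy : δ ≤ infEDist y A) : edist x y ≤ (1 + ediam A / δ) * collapseEDist A x y := by
  rcases A.eq_empty_or_nonempty with rfl | ⟨a, ha⟩
  · simp [collapseEDist]
  have hxa : edist x a ≤ infEDist x A + ediam A := edist_le_infEDist_add_ediam ha
  have hya : edist y a ≤ infEDist y A + ediam A := edist_le_infEDist_add_ediam ha
  rw [collapseEDist, mul_min]
  refine le_min (le_mul_of_one_le_left' le_self_add) ?_
  calc edist x y ≤ edist x a + edist y a := edist_triangle_right x y a
    _ ≤ (infEDist x A + ediam A) + (infEDist y A + ediam A) := add_le_add hxa hya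
    _ = (infEDist x A + infEDist y A) + ediam A / δ * (δ + δ) := by
      rw [mul_add, ENNReal.div_mul_cancel hδ₀ hδ, add_add_add_comm]
    _ ≤ (infEDist x A + infEDist y A) + ediam A / δ * (infEDist x A + infEDist y A) := by gcongr
    _ = (1 + ediam A / δ) * (infEDist x A + infEDist y A) := by rw [add_mul, one_mul]

end Collapse

lemma exists_pos_le_infEDist_of_isCompact {X : Type*} [PseudoEMetricSpace X] {A B : Set X}
    (hA : IsCompact A) (hAB : A ⊆ interior B) :
    ∃ δ : ℝ≥0∞, δ ≠ 0 ∧ δ ≠ ∞ ∧ ∀ y ∉ B, δ ≤ infEDist y A := by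
  obtain ⟨r, hr, hrB⟩ := hA.exists_thickening_subset_open isOpen_interior hAB
  refine ⟨ENNReal.ofReal r, (ENNReal.ofReal_pos.2 hr).ne', ENNReal.ofReal_ne_top, fun y hy => ?_⟩
  exact not_lt.1 fun hlt => hy (interior_subset (hrB hlt))

lemma exists_weight_collapseEDist {X : Type*} [PseudoMetricSpace X] {A B : Set X}
    (hA : IsCompact A) (hAB : A ⊆ interior B) (G N : ℝ≥0) :
    ∃ c : ℝ≥0, (∀ x ∉ B, ∀ y ∉ B, G * edist x y ≤ c * collapseEDist A x y) ∧
      ∀ x ∈ A, ∀ y ∉ B, (N : ℝ≥0∞) ≤ c * collapseEDist A x y := by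
  obtain ⟨δ, hδ₀, hδ, hδB⟩ := exists_pos_le_infEDist_of_isCompact hA hAB
  have hfin : G * (1 + ediam A / δ) + N / δ ≠ ∞ := by
    have := hA.isBounded.ediam_ne_top
    finiteness
  lift G * (1 + ediam A / δ) + N / δ to ℝ≥0 using hfin with c hc
  have hGc : G * (1 + ediam A / δ) ≤ c := hc ▸ le_self_add
  have hNc : N / δ ≤ (c : ℝ≥0∞) := hc ▸ le_add_self
  refine ⟨c, fun x hx y hy => ?_, fun x hx y hy => ?_⟩
  · calc G * edist x y ≤ G * ((1 + ediam A / δ) * collapseEDist A x y) := by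
          gcongr
          exact edist_le_mul_collapseEDist hδ₀ hδ (hδB x hx) (hδB y hy)
      _ = G * (1 + ediam A / δ) * collapseEDist A x y := (mul_assoc _ _ _).symm
      _ ≤ c * collapseEDist A x y := by gcongr
  · calc (N : ℝ≥0∞) = N / δ * δ := (ENNReal.div_mul_cancel hδ₀ hδ).symm
      _ ≤ c * collapseEDist A x y := by
          gcongr
          exact (hδB y hy).trans (infEDist_le_collapseEDist_of_mem hx)

section StretchEDist

variable {X : Type*} [PseudoEMetricSpace X] {K : ℕ → Set X} {c : ℕ → ℝ≥0} {x y : X}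

/-- The extended pseudometric stretched by weighted collapses of the sets `K n`: the `n`-th
summand lengthens only what leaves `K n`. -/
noncomputable def stretchEDist (K : ℕ → Set X) (c : ℕ → ℝ≥0) (x y : X) : ℝ≥0∞ :=
  edist x y + ∑' n, c n * collapseEDist (K n) x y

lemma stretchEDist_self (K : ℕ → Set X) (c : ℕ → ℝ≥0) (x : X) : stretchEDist K c x x = 0 := by
  simp only [stretchEDist, edist_self, collapseEDist_self, mul_zero, tsum_zero, add_zero]

lemma stretchEDist_comm (K : ℕ → Set X) (c : ℕ → ℝ≥0) (x y : X) :
    stretchEDist K c x y = stretchEDist K c y x := by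
  simp only [stretchEDist, edist_comm x y, collapseEDist_comm _ x y]

lemma stretchEDist_triangle (K : ℕ → Set X) (c : ℕ → ℝ≥0) (x y z : X) :
    stretchEDist K c x z ≤ stretchEDist K c x y + stretchEDist K c y z := by
  rw [stretchEDist, stretchEDist, stretchEDist, add_add_add_comm, ← ENNReal.tsum_add]
  gcongr with n
  · exact edist_triangle x y z
  · rw [← mul_add]
    gcongr
    exact collapseEDist_triangle (K n) x y z

lemma edist_le_stretchEDist : edist x y ≤ stretchEDist K c x y :=
  le_self_add

lemma mul_collapseEDist_le_stretchEDist (n : ℕ) :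
    c n * collapseEDist (K n) x y ≤ stretchEDist K c x y :=
  (ENNReal.le_tsum n).trans le_add_self

lemma stretchEDist_le_of_mem (hK : Monotone K) {m : ℕ} (hx : x ∈ K m) (hy : y ∈ K m) :
    stretchEDist K c x y ≤ (1 + ∑ n ∈ Finset.range m, c n : ℝ≥0) * edist x y := by
  have hvanish : ∀ n ∉ Finset.range m, c n * collapseEDist (K n) x y = 0 := fun n hn => by
    have hmn : m ≤ n := not_lt.1 (mt Finset.mem_range.2 hn)
    rw [collapseEDist_eq_zero_of_mem (hK hmn hx) (hK hmn hy), mul_zero]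
  rw [stretchEDist, tsum_eq_sum hvanish]
  push_cast
  rw [add_mul, one_mul, Finset.sum_mul]
  gcongr
  exact collapseEDist_le_edist

end StretchEDist

section StretchDist

variable {X : Type*} [PseudoMetricSpace X] (K : CompactExhaustion X) (c : ℕ → ℝ≥0)

lemma stretchEDist_ne_top (x y : X) : stretchEDist K c x y ≠ ∞ := by
  have hx : x ∈ K (max (K.find x) (K.find y)) := K.subset (le_max_left _ _) (K.mem_find x)
  have hy : y ∈ K (max (K.find x) (K.find y)) := K.subset (le_max_right _ _) (K.mem_find y)
  exact ne_top_of_le_ne_top (by finiteness) (stretchEDist_le_of_mem (OrderHomClass.mono K) hx hy)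

/-- The real-valued pseudometric underlying `stretchEDist`, which is finite along a compact
exhaustion. -/
noncomputable def stretchDist (x y : X) : ℝ :=
  (stretchEDist K c x y).toReal

lemma stretchDist_comm (x y : X) : stretchDist K c x y = stretchDist K c y x :=
  congrArg ENNReal.toReal (stretchEDist_comm K c x y)

lemma stretchDist_triangle (x y z : X) :
    stretchDist K c x z ≤ stretchDist K c x y + stretchDist K c y z :=
  ENNReal.toReal_le_add (stretchEDist_triangle K c x y z) (stretchEDist_ne_top K c x y)
    (stretchEDist_ne_top K c y z)

variable {K c} {x y : X}

lemma le_stretchDist_of_le {b : ℝ≥0∞} (h : b ≤ stretchEDist K c x y) :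
    b.toReal ≤ stretchDist K c x y :=
  ENNReal.toReal_mono (stretchEDist_ne_top K c x y) h

lemma dist_le_stretchDist : dist x y ≤ stretchDist K c x y :=
  dist_edist x y ▸ le_stretchDist_of_le edist_le_stretchEDist

lemma stretchDist_le_of_mem {m : ℕ} (hx : x ∈ K m) (hy : y ∈ K m) :
    stretchDist K c x y ≤ (1 + ∑ n ∈ Finset.range m, c n : ℝ≥0) * dist x y := by
  rw [dist_edist, ← ENNReal.coe_toReal, ← ENNReal.toReal_mul]
  exact ENNReal.toReal_mono (by finiteness)
    (stretchEDist_le_of_mem (OrderHomClass.mono K) hx hy)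

variable (K c) in
lemma tendsto_stretchDist_self (x : X) : Tendsto (stretchDist K c x) (𝓝 x) (𝓝 0) := by
  have hbound : ∀ᶠ y in 𝓝 x, stretchDist K c x y ≤
      (1 + ∑ n ∈ Finset.range (K.find x + 1), c n : ℝ≥0) * dist x y := by
    filter_upwards [mem_interior_iff_mem_nhds.1 (K.subset_interior_succ _ (K.mem_find x))]
      with y hy
    exact stretchDist_le_of_mem (K.subset (Nat.le_succ _) (K.mem_find x)) hy
  refine squeeze_zero' (Eventually.of_forall fun _ => ENNReal.toReal_nonneg) hbound ?_
  exact Continuous.tendsto' (by fun_prop) _ _ (by simp)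

end StretchDist

lemma stretchDist_eq_zero_iff {X : Type*} [MetricSpace X] {K : CompactExhaustion X}
    {c : ℕ → ℝ≥0} {x y : X} : stretchDist K c x y = 0 ↔ x = y := by
  refine ⟨fun h => dist_le_zero.1 (h ▸ dist_le_stretchDist), ?_⟩
  rintro rfl
  rw [stretchDist, stretchEDist_self, ENNReal.toReal_zero]

lemma isOpen_iff_of_dist_le_of_tendsto {X : Type*} [PseudoMetricSpace X] {ρ : X → X → ℝ}
    (hle : ∀ x y, dist x y ≤ ρ x y) (htendsto : ∀ x, Tendsto (ρ x) (𝓝 x) (𝓝 0)) {s : Set X} :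
    IsOpen s ↔ ∀ x ∈ s, ∃ ε > (0 : ℝ), ∀ y, ρ x y < ε → y ∈ s := by
  refine ⟨fun hs x hx => ?_, fun h => isOpen_iff_mem_nhds.2 fun x hx => ?_⟩
  · obtain ⟨ε, hε, hball⟩ := Metric.isOpen_iff.1 hs x hx
    exact ⟨ε, hε, fun y hy => hball (mem_ball'.2 ((hle x y).trans_lt hy))⟩
  · obtain ⟨ε, hε, hball⟩ := h x hx
    filter_upwards [(htendsto x).eventually_lt_const hε] with y hy using hball y hy

lemma isCompact_closure_of_le_of_exhaustion {X : Type*} [TopologicalSpace X] [R1Space X]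
    {K : CompactExhaustion X} {ρ : X → X → ℝ}
    (hρ : ∀ n : ℕ, ∀ x ∈ K n, ∀ y ∉ K (n + 1), (n : ℝ) ≤ ρ x y) {s : Set X}
    (hs : ∃ M : ℝ, ∀ x ∈ s, ∀ y ∈ s, ρ x y ≤ M) : IsCompact (closure s) := by
  rcases s.eq_empty_or_nonempty with rfl | ⟨x, hx⟩
  · simp
  obtain ⟨M, hM⟩ := hs
  obtain ⟨k, hk⟩ := exists_nat_gt M
  set n := max (K.find x) k
  have hxn : x ∈ K n := K.subset (le_max_left _ _) (K.mem_find x)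
  have hMn : M < n := hk.trans_le (Nat.cast_le.2 (le_max_right _ _))
  refine (K.isCompact (n + 1)).closure_of_subset fun y hy => ?_
  by_contra hyn
  exact (hMn.trans_le (hρ n x hxn y hyn)).not_ge (hM x hx y hy)

/-- Let `(X, d)` be a locally compact separable metric space with an exhaustion `⟨K n⟩` by
compact sets with `K n ⊆ int (K (n+1))` and `X = ⋃ n, K n`. Then for every `g : ℕ → ℕ` there
is a proper metric `d'` on `X`, compatible with the topology of `X`, such that
(i) `d' x y ≥ g n * d x y` whenever `x, y ∉ K_{n-1}`, and
(ii) `d'(K_{n-1}, X \ K n) ≥ n` (with `K_{-1} = ∅`; the `n = 0` instances of (i) and (ii) are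
stated separately resp. are trivial). -/
theorem stmt11 {X : Type*} [MetricSpace X] [LocallyCompactSpace X]
    [TopologicalSpace.SeparableSpace X]
    (K : ℕ → Set X) (hK : ∀ n, IsCompact (K n))
    (hsub : ∀ n, K n ⊆ interior (K (n + 1)))
    (hcover : (⋃ n, K n) = Set.univ)
    (g : ℕ → ℕ) :
    ∃ d' : X → X → ℝ,
      -- `d'` is a metric on `X`
      (∀ x y, 0 ≤ d' x y) ∧ (∀ x y, d' x y = 0 ↔ x = y) ∧
      (∀ x y, d' x y = d' y x) ∧ (∀ x y z, d' x z ≤ d' x y + d' y z) ∧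
      -- compatible with the topology of `X`
      (∀ s : Set X, IsOpen s ↔ ∀ x ∈ s, ∃ ε > (0 : ℝ), ∀ y, d' x y < ε → y ∈ s) ∧
      -- proper: every `d'`-bounded set has compact closure
      (∀ s : Set X, (∃ M : ℝ, ∀ x ∈ s, ∀ y ∈ s, d' x y ≤ M) → IsCompact (closure s)) ∧
      -- (i)
      (∀ x y : X, (g 0 : ℝ) * dist x y ≤ d' x y) ∧
      (∀ n : ℕ, ∀ x ∉ K n, ∀ y ∉ K n, (g (n + 1) : ℝ) * dist x y ≤ d' x y) ∧
      -- (ii)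
      (∀ n : ℕ, ∀ x ∈ K n, ∀ y ∉ K (n + 1), ((n + 1 : ℕ) : ℝ) ≤ d' x y) := by
  -- Two empty sets in front make `L (n + 1)` the paper's `K_{n-1}`, with `K_{-1} = ∅`.
  let L : CompactExhaustion X := (CompactExhaustion.mk K hK hsub hcover).shiftr.shiftr
  choose c hg hsep using fun n =>
    exists_weight_collapseEDist (L.isCompact n) (L.subset_interior_succ n) (g n) n
  have hstretch (n : ℕ) (x) (hx : x ∉ L (n + 1)) (y) (hy : y ∉ L (n + 1)) :
      g n * dist x y ≤ stretchDist L c x y := by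
    simpa [← dist_edist] using
      le_stretchDist_of_le ((hg n x hx y hy).trans (mul_collapseEDist_le_stretchEDist n))
  have hgap (n : ℕ) (x) (hx : x ∈ L n) (y) (hy : y ∉ L (n + 1)) : n ≤ stretchDist L c x y := by
    simpa using
      le_stretchDist_of_le ((hsep n x hx y hy).trans (mul_collapseEDist_le_stretchEDist n))
  exact ⟨stretchDist L c, fun _ _ => ENNReal.toReal_nonneg, fun _ _ => stretchDist_eq_zero_iff,
    stretchDist_comm L c, stretchDist_triangle L c,
    fun _ => isOpen_iff_of_dist_le_of_tendsto (fun _ _ => dist_le_stretchDist)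
      (tendsto_stretchDist_self L c),
    fun _ => isCompact_closure_of_le_of_exhaustion hgap,
    fun x y => hstretch 0 x (notMem_empty x) y (notMem_empty y),
    fun n => hstretch (n + 1),
    fun n x hx y hy => (Nat.cast_le.2 (Nat.le_succ _)).trans (hgap (n + 2) x hx y hy)⟩
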